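/- arXiv:1904.07796 — 2 statements merged into one kernel-verified Lean document; each statement's English description precedes it below -/
import Mathlib

section
/- Let m ≥ 3 and let u be a nonempty cyclically reduced word in the letters a^{±1}, b^{±1} that represents the identity element of the dihedral Artin group A_m = ⟨a, b | p_m(a,b) = p_m(b,a)⟩. Then, possibly after replacing u by one of its cyclic permutations, u contains two disjoint (non-overlapping) subwords w₁ and w₂, each equal to one of the words p_m(a,b), p_m(a,b)⁻¹, p_m(b,a), p_m(b,a)⁻¹, such that no two of the letters of w₁ and w₂ lie in the same syllable of u, nor in the same syllable of any cyclic permutation of u. -/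
/-- The alternating word of length `m` starting with the generator `x`, with all
exponents `+1`, as a list of letters (generator, sign). With `false = a` and
`true = b`, `altL false m` is the word `p_m(a,b) = aba⋯` and `altL true m` is
`p_m(b,a) = bab⋯`. -/
def altL : Bool → ℕ → List (Bool × Bool)
  | _, 0 => []
  | x, n + 1 => (x, true) :: altL (!x) n

/-- The formal inverse of a word: reverse the word and invert each letter. -/
def invL (L : List (Bool × Bool)) : List (Bool × Bool) :=
  (L.map fun p => (p.1, !p.2)).reverse

/-- The four words `p_m(a,b)`, `p_m(a,b)⁻¹`, `p_m(b,a)`, `p_m(b,a)⁻¹`. -/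
def pmWords (m : ℕ) : List (List (Bool × Bool)) :=
  [altL false m, invL (altL false m), altL true m, invL (altL true m)]

/-- Two consecutive letters do not cancel: it is not the case that they have the
same generator and opposite signs. -/
def NoCancel (p q : Bool × Bool) : Prop := ¬(p.1 = q.1 ∧ p.2 ≠ q.2)

/-- A word is cyclically reduced iff each of its cyclic permutations is reduced. -/
def CyclicallyReduced (u : List (Bool × Bool)) : Prop :=
  ∀ k : ℕ, List.Chain' NoCancel (u.rotate k)

/-- The generator of the letter of `v` at cyclic position `i`. -/
def cgen (v : List (Bool × Bool)) (i : ℕ) : Bool :=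
  (v.getD (i % v.length) (false, true)).1

/-- There is a cyclic arc of `v` from position `p` forward to position `q` all of
whose letters have the same generator. -/
def ConstArc (v : List (Bool × Bool)) (p q : ℕ) : Prop :=
  ∃ d : ℕ, d < v.length ∧ q % v.length = (p + d) % v.length ∧
    ∀ t ≤ d, cgen v (p + t) = cgen v p

/-- Positions `p` and `q` lie in a common syllable of `v` or of some cyclic
permutation of `v`: some constant-generator cyclic arc joins them. -/
def SameCyclicSyllable (v : List (Bool × Bool)) (p q : ℕ) : Prop :=
  ConstArc v p q ∨ ConstArc v q p

/-!
Send `A_m` to the free product `ℤ/m * ℤ/2` with generators `τ` and `σ` by `a ↦ τσ`, `b ↦ στ`, and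
call the words `p_m(a,b)^{±1}`, `p_m(b,a)^{±1}` windows. If a reduced word `v` contains no window,
then its maximal alternating blocks of constant sign have length less than `m`, and each of them
contributes exactly one power of `τ` to the normal form of the image of `v`. Hence the image is not
trivial if `v` is nonempty, and `± exponentSum v` is at most the sum `residueSum` of the residues of
the exponents `±k` in `{0, …, m - 1}`.

A nonempty reduced word representing the identity therefore contains a window `w`, of sign `s` say.
Rotate it to the start of `u` and split off the powers of the adjacent letters, so that
`u = w y^k v x^l` where `y` and `x` are the last and the first letter of `w`. If `v` contained no
window, then its exponent sum would be `m + k + l`, up to the sign `s`. But its image is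
`y^{-k} w^{-1} x^{-l}`, whose residue sum for that sign is at most `k + l`, because the image of `w`
is a power of `σ` and each of the other letters raises the residue sum by at most one. So `v`
contains a second window, and the splitting keeps the two windows in different syllables.
-/

open Monoid

namespace DihedralArtin

section FreeProduct

variable {ι : Type*} {G : ι → Type*} [∀ i, Group (G i)] [DecidableEq ι] [∀ i, DecidableEq (G i)]

/-- The index of the factor containing the first syllable of the normal form of an element of a
free product; `none` for the identity. -/
def firstIndex (g : CoprodI G) : Option ι :=
  (CoprodI.Word.equiv g).fstIdx

/-- The sum, over the syllables of the normal form of an element of a free product, of a weight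
depending on the syllable. -/
def weight {A : Type*} [AddMonoid A] (f : ∀ i, G i → A) (g : CoprodI G) : A :=
  ((CoprodI.Word.equiv g).toList.map fun p => f p.1 p.2).sum

lemma equiv_prod (w : CoprodI.Word G) : CoprodI.Word.equiv w.prod = w :=
  CoprodI.Word.equiv.apply_symm_apply w

lemma firstIndex_prod (w : CoprodI.Word G) : firstIndex w.prod = w.fstIdx := by
  rw [firstIndex, equiv_prod]

lemma weight_prod {A : Type*} [AddMonoid A] (f : ∀ i, G i → A) (w : CoprodI.Word G) :
    weight f w.prod = (w.toList.map fun p => f p.1 p.2).sum := by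
  rw [weight, equiv_prod]

lemma firstIndex_one : firstIndex (1 : CoprodI G) = none :=
  firstIndex_prod CoprodI.Word.empty

lemma weight_one {A : Type*} [AddMonoid A] (f : ∀ i, G i → A) :
    weight f (1 : CoprodI G) = 0 :=
  weight_prod f CoprodI.Word.empty

lemma firstIndex_of_mul {i : ι} {h : G i} (hh : h ≠ 1) {g : CoprodI G}
    (hg : firstIndex g ≠ some i) : firstIndex (CoprodI.of h * g) = some i := by
  obtain ⟨w, rfl : w.prod = g⟩ := CoprodI.Word.equiv.symm.surjective g
  rw [firstIndex_prod] at hg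
  rw [← CoprodI.Word.prod_cons i h w hh hg, firstIndex_prod, CoprodI.Word.fstIdx_cons]

lemma exists_eq_of_mul (i : ι) (g : CoprodI G) :
    ∃ (h : G i) (g' : CoprodI G), firstIndex g' ≠ some i ∧ g = CoprodI.of h * g' := by
  obtain ⟨w, rfl : w.prod = g⟩ := CoprodI.Word.equiv.symm.surjective g
  obtain ⟨p, rfl⟩ := (CoprodI.Word.equivPair i).symm.surjective w
  refine ⟨p.head, p.tail.prod, ?_, ?_⟩
  · rw [firstIndex_prod]
    exact p.fstIdx_ne
  · rw [CoprodI.Word.equivPair_symm, CoprodI.Word.prod_rcons]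

lemma weight_of_mul {A : Type*} [AddMonoid A] {f : ∀ i, G i → A} {i : ι} (hf : f i 1 = 0)
    (h : G i) {g : CoprodI G} (hg : firstIndex g ≠ some i) :
    weight f (CoprodI.of h * g) = f i h + weight f g := by
  by_cases hh : h = 1
  · rw [hh, map_one, one_mul, hf, zero_add]
  obtain ⟨w, rfl : w.prod = g⟩ := CoprodI.Word.equiv.symm.surjective g
  rw [firstIndex_prod] at hg
  rw [← CoprodI.Word.prod_cons i h w hh hg, weight_prod, weight_prod, CoprodI.Word.cons_toList,
    List.map_cons, List.sum_cons]

lemma weight_of_mul_le {f : ∀ i, G i → ℤ} {i : ι} (hf : f i 1 = 0)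
    (hmul : ∀ h h', f i (h * h') ≤ f i h + f i h') (h : G i) (g : CoprodI G) :
    weight f (CoprodI.of h * g) ≤ f i h + weight f g := by
  obtain ⟨h', g, hg, rfl⟩ := exists_eq_of_mul i g
  rw [← mul_assoc, ← map_mul, weight_of_mul hf _ hg, weight_of_mul hf _ hg, ← add_assoc]
  gcongr
  exact hmul h h'

lemma weight_of_mul_eq_self {A : Type*} [AddMonoid A] {f : ∀ i, G i → A} {i : ι}
    (hf : ∀ h, f i h = 0) (h : G i) (g : CoprodI G) :
    weight f (CoprodI.of h * g) = weight f g := by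
  obtain ⟨h', g, hg, rfl⟩ := exists_eq_of_mul i g
  rw [← mul_assoc, ← map_mul, weight_of_mul (hf 1) _ hg, weight_of_mul (hf 1) _ hg, hf, hf]

end FreeProduct

section Words

/-- The alternating word of length `n` starting with the generator `x`, all of whose letters
have sign `s`. -/
def altWord : Bool → Bool → ℕ → List (Bool × Bool)
  | _, _, 0 => []
  | x, s, n + 1 => (x, s) :: altWord (!x) s n

/-- No subword of `v` is one of the four alternating words of length `m` of constant sign. -/
def Windowless (m : ℕ) (v : List (Bool × Bool)) : Prop :=
  ∀ x s, ¬ altWord x s m <:+: v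

/-- A sign as an integer. -/
def sgn (s : Bool) : ℤ := if s then 1 else -1

/-- The exponent sum of a word. -/
def exponentSum (v : List (Bool × Bool)) : ℤ := (v.map fun p => sgn p.2).sum

lemma length_altWord (x s : Bool) (n : ℕ) : (altWord x s n).length = n := by
  induction n generalizing x with
  | zero => rfl
  | succ n ih => rw [altWord, List.length_cons, ih]

lemma altWord_succ_eq_append (x s : Bool) (n : ℕ) :
    altWord x s (n + 1) = altWord x s n ++ [(xor x n.bodd, s)] := by
  induction n generalizing x with
  | zero => simp [altWord]
  | succ n ih =>
    rw [altWord, ih, altWord]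
    cases x <;> simp

lemma altWord_isPrefix (x s : Bool) {k n : ℕ} (h : k ≤ n) : altWord x s k <+: altWord x s n := by
  induction n, h using Nat.le_induction with
  | base => exact List.prefix_rfl
  | succ n _ ih => exact ih.trans ⟨_, (altWord_succ_eq_append x s n).symm⟩

lemma isChain_altWord (x s : Bool) (n : ℕ) :
    (altWord x s n).IsChain fun p q => p.1 ≠ q.1 := by
  induction n generalizing x with
  | zero => exact List.isChain_nil
  | succ n ih =>
    cases n with
    | zero => exact List.isChain_singleton _
    | succ n => exact List.isChain_cons_cons.2 ⟨by simp, ih (!x)⟩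

lemma altL_eq_altWord (x : Bool) (n : ℕ) : altL x n = altWord x true n := by
  induction n generalizing x with
  | zero => rfl
  | succ n ih => rw [altL, altWord, ih]

lemma invL_altL (x : Bool) (n : ℕ) : invL (altL x n) = altWord (xor x (!n.bodd)) false n := by
  rw [altL_eq_altWord]
  induction n with
  | zero => rfl
  | succ n ih =>
    rw [invL] at ih
    rw [altWord_succ_eq_append, invL, List.map_append, List.reverse_append, ih]
    cases x <;> cases h : n.bodd <;> simp [altWord, h]

lemma altWord_mem_pmWords (x s : Bool) (m : ℕ) : altWord x s m ∈ pmWords m := by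
  rw [pmWords, invL_altL, invL_altL, altL_eq_altWord, altL_eq_altWord]
  cases x <;> cases s <;> cases m.bodd <;> simp

lemma Windowless.of_cons {m : ℕ} {p : Bool × Bool} {v : List (Bool × Bool)}
    (h : Windowless m (p :: v)) : Windowless m v :=
  fun x s hv => h x s (List.infix_cons hv)

lemma Windowless.lt_of_isPrefix {m l : ℕ} {x s : Bool} {v : List (Bool × Bool)}
    (h : Windowless m v) (hl : altWord x s l <+: v) : l < m := by
  by_contra! hml
  exact h x s ((altWord_isPrefix x s hml).trans hl).isInfix

lemma sgn_not (s : Bool) : sgn (!s) = -sgn s := by cases s <;> rfl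

lemma sgn_mul_self (s : Bool) : sgn s * sgn s = 1 := by cases s <;> rfl

lemma exponentSum_cons (p : Bool × Bool) (v : List (Bool × Bool)) :
    exponentSum (p :: v) = sgn p.2 + exponentSum v := by
  simp [exponentSum]

lemma exponentSum_append (v w : List (Bool × Bool)) :
    exponentSum (v ++ w) = exponentSum v + exponentSum w := by
  simp [exponentSum]

lemma exponentSum_replicate (k : ℕ) (p : Bool × Bool) :
    exponentSum (List.replicate k p) = k * sgn p.2 := by
  simp [exponentSum]

lemma exponentSum_altWord (x s : Bool) (n : ℕ) : exponentSum (altWord x s n) = n * sgn s := by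
  induction n generalizing x with
  | zero => simp [exponentSum, altWord]
  | succ n ih =>
    rw [altWord, exponentSum_cons, ih]
    push_cast
    ring

end Words

section Quotient

/-- The factors of the free product of `ℤ/m`, with index `false`, and `ℤ/2`, with index `true`. -/
abbrev Factor (m : ℕ) (i : Bool) : Type := Multiplicative (ZMod (bif i then 2 else m))

variable (m : ℕ)

/-- The `k`-th power of the generator `τ` of the factor `ℤ/m`. -/
def tau (k : ℤ) : CoprodI (Factor m) :=
  CoprodI.of (i := false) (Multiplicative.ofAdd (k : ZMod m))

/-- The generator `σ` of the factor `ℤ/2`. -/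
def sigma : CoprodI (Factor m) :=
  CoprodI.of (i := true) (Multiplicative.ofAdd (1 : ZMod 2))

/-- The element `σ` if `x = s` and the identity otherwise. -/
def sigmaIf (x s : Bool) : CoprodI (Factor m) := if x = s then sigma m else 1

/-- The image of a letter in the free product `ℤ/m * ℤ/2`, where `a ↦ τσ` and `b ↦ στ`. -/
def letterImage (p : Bool × Bool) : CoprodI (Factor m) :=
  sigmaIf m p.1 p.2 * tau m (sgn p.2) * sigmaIf m (!p.1) p.2

/-- The image of a word in the free product `ℤ/m * ℤ/2`, where `a ↦ τσ` and `b ↦ στ`. -/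
def wordImage (v : List (Bool × Bool)) : CoprodI (Factor m) := (v.map (letterImage m)).prod

/-- The normal subgroup of the free group by which `A_m` is the quotient. -/
abbrev relations : Subgroup (FreeGroup Bool) :=
  Subgroup.normalClosure {FreeGroup.mk (altL false m) * (FreeGroup.mk (altL true m))⁻¹}

lemma tau_zero : tau m 0 = 1 := by simp [tau]

lemma tau_add (k l : ℤ) : tau m (k + l) = tau m k * tau m l := by
  rw [tau, Int.cast_add, ofAdd_add, map_mul, tau, tau]

lemma tau_neg (k : ℤ) : tau m (-k) = (tau m k)⁻¹ :=
  eq_inv_of_mul_eq_one_left (by rw [← tau_add, neg_add_cancel, tau_zero])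

lemma tau_natCast_mul (k : ℤ) : tau m (m * k) = 1 := by simp [tau]

lemma sigma_mul_self : sigma m * sigma m = 1 := by
  have h : Multiplicative.ofAdd (1 : ZMod 2) * Multiplicative.ofAdd 1 = 1 := rfl
  rw [sigma, ← map_mul]
  exact (congrArg (CoprodI.of (M := Factor m) (i := true)) h).trans (map_one _)

lemma sigmaIf_mul_self (x s : Bool) : sigmaIf m x s * sigmaIf m x s = 1 := by
  rw [sigmaIf]
  split_ifs
  · exact sigma_mul_self m
  · exact one_mul 1

lemma sigmaIf_inv (x s : Bool) : (sigmaIf m x s)⁻¹ = sigmaIf m x s :=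
  inv_eq_of_mul_eq_one_left (sigmaIf_mul_self m x s)

lemma sigmaIf_not_mul {x s y t : Bool} (h : x = s ↔ y = t) :
    sigmaIf m (!x) s * sigmaIf m y t = sigma m := by
  revert x s y t
  simp [sigmaIf]

lemma letterImage_not (x s : Bool) : letterImage m (x, !s) = (letterImage m (x, s))⁻¹ := by
  have h (y : Bool) : sigmaIf m y (!s) = sigmaIf m (!y) s := by cases y <;> cases s <;> rfl
  simp only [letterImage, h, Bool.not_not, sgn_not, tau_neg, mul_inv_rev, sigmaIf_inv, mul_assoc]

lemma wordImage_cons (p : Bool × Bool) (v : List (Bool × Bool)) :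
    wordImage m (p :: v) = letterImage m p * wordImage m v := by
  rw [wordImage, List.map_cons, List.prod_cons, wordImage]

lemma wordImage_append (v w : List (Bool × Bool)) :
    wordImage m (v ++ w) = wordImage m v * wordImage m w := by
  rw [wordImage, List.map_append, List.prod_append, wordImage, wordImage]

lemma wordImage_replicate (k : ℕ) (p : Bool × Bool) :
    wordImage m (List.replicate k p) = letterImage m p ^ k := by
  rw [wordImage, List.map_replicate, List.prod_replicate]

lemma wordImage_altWord (x s : Bool) (n : ℕ) :
    wordImage m (altWord x s n) =
      sigmaIf m x s * tau m (n * sgn s) * sigmaIf m (xor x n.bodd) s := by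
  induction n generalizing x with
  | zero => simp [altWord, wordImage, tau_zero, sigmaIf_mul_self]
  | succ n ih =>
    have hx : xor (!x) n.bodd = xor x (n + 1).bodd := by cases x <;> simp
    calc wordImage m (altWord x s (n + 1))
        = sigmaIf m x s * tau m (sgn s) * (sigmaIf m (!x) s * sigmaIf m (!x) s) *
            tau m (n * sgn s) * sigmaIf m (xor x (n + 1).bodd) s := by
          simp only [altWord, wordImage_cons, letterImage, ih, hx, mul_assoc]
      _ = sigmaIf m x s * tau m ((n + 1 : ℕ) * sgn s) * sigmaIf m (xor x (n + 1).bodd) s := by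
          rw [sigmaIf_mul_self, mul_one, mul_assoc (sigmaIf m x s), ← tau_add]
          congr 3
          push_cast
          ring

lemma wordImage_altWord_self (x s : Bool) :
    wordImage m (altWord x s m) = sigmaIf m x s * sigmaIf m (xor x m.bodd) s := by
  rw [wordImage_altWord, tau_natCast_mul, mul_one]

variable {m}

lemma lift_mk_eq_one_of_mem_relations {H : Type*} [Group H] (f : Bool → H)
    (hf : FreeGroup.lift f (FreeGroup.mk (altL false m)) =
      FreeGroup.lift f (FreeGroup.mk (altL true m)))
    {v : List (Bool × Bool)} (hv : FreeGroup.mk v ∈ relations m) :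
    FreeGroup.lift f (FreeGroup.mk v) = 1 := by
  refine MonoidHom.mem_ker.1 (Subgroup.normalClosure_le_normal (Set.singleton_subset_iff.2 ?_) hv)
  rw [SetLike.mem_coe, MonoidHom.mem_ker, map_mul, map_inv, hf, mul_inv_cancel]

lemma wordImage_eq_one {v : List (Bool × Bool)} (hv : FreeGroup.mk v ∈ relations m) :
    wordImage m v = 1 := by
  have hlift (w : List (Bool × Bool)) :
      FreeGroup.lift (fun x => letterImage m (x, true)) (FreeGroup.mk w) = wordImage m w := by
    rw [FreeGroup.lift_mk, wordImage]
    congr 2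
    ext ⟨x, s⟩
    cases s
    · exact (letterImage_not m x true).symm
    · rfl
  rw [← hlift]
  refine lift_mk_eq_one_of_mem_relations _ ?_ hv
  rw [hlift, hlift, altL_eq_altWord, altL_eq_altWord, wordImage_altWord_self,
    wordImage_altWord_self]
  cases m.bodd <;> simp [sigmaIf, sigma_mul_self]

lemma exponentSum_eq_zero {v : List (Bool × Bool)} (hv : FreeGroup.mk v ∈ relations m) :
    exponentSum v = 0 := by
  have hlift (w : List (Bool × Bool)) :
      FreeGroup.lift (fun _ : Bool => Multiplicative.ofAdd (1 : ℤ)) (FreeGroup.mk w) =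
        Multiplicative.ofAdd (exponentSum w) := by
    rw [FreeGroup.lift_mk, exponentSum, ofAdd_list_prod, List.map_map]
    congr 2
    ext ⟨x, s⟩
    cases s <;> rfl
  refine Multiplicative.ofAdd.injective ((hlift v).symm.trans ?_)
  refine lift_mk_eq_one_of_mem_relations _ ?_ hv
  rw [hlift, hlift, altL_eq_altWord, altL_eq_altWord, exponentSum_altWord, exponentSum_altWord]

lemma mk_rotate_mem_relations {v : List (Bool × Bool)} (hv : FreeGroup.mk v ∈ relations m)
    (i : ℕ) : FreeGroup.mk (v.rotate i) ∈ relations m := by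
  induction i with
  | zero => rwa [List.rotate_zero]
  | succ i ih =>
    rw [← List.rotate_rotate]
    cases h : v.rotate i with
    | nil => rwa [h] at ih
    | cons p w =>
      rw [h, ← List.singleton_append, ← FreeGroup.mul_mk] at ih
      rw [List.rotate_cons_succ, List.rotate_zero, ← FreeGroup.mul_mk]
      exact Subgroup.normalClosure_normal.mem_comm ih

end Quotient

section Weight

variable (m : ℕ)

/-- The weight of `τ ^ k` is the residue of `k`, or of `-k` if `e = false`, in `{0, …, m - 1}`, and
the weight of `σ` is zero. -/
def syllableWeight (e : Bool) : ∀ i, Factor m i → ℤ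
  | false, c => (((sgn e : ZMod m) * Multiplicative.toAdd (α := ZMod m) c).val : ℤ)
  | true, _ => 0

lemma syllableWeight_one (e i : Bool) : syllableWeight m e i 1 = 0 := by
  cases i <;> simp [syllableWeight]

lemma syllableWeight_mul_le (e i : Bool) (c d : Factor m i) :
    syllableWeight m e i (c * d) ≤ syllableWeight m e i c + syllableWeight m e i d := by
  cases i
  · simp only [syllableWeight, toAdd_mul, mul_add]
    exact_mod_cast ZMod.val_add_le _ _
  · exact le_rfl

/-- The sum of the residues in `{0, …, m - 1}` of the exponents of `τ` in the normal form, negated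
if `e = false`. -/
def residueSum (e : Bool) (g : CoprodI (Factor m)) : ℤ := weight (syllableWeight m e) g

variable {m} {e : Bool}

lemma residueSum_one : residueSum m e 1 = 0 := weight_one _

lemma residueSum_sigma_mul (g : CoprodI (Factor m)) :
    residueSum m e (sigma m * g) = residueSum m e g :=
  weight_of_mul_eq_self (fun _ => rfl) _ g

lemma residueSum_sigmaIf_mul (x s : Bool) (g : CoprodI (Factor m)) :
    residueSum m e (sigmaIf m x s * g) = residueSum m e g := by
  rw [sigmaIf]
  split_ifs
  · exact residueSum_sigma_mul g
  · rw [one_mul]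

lemma residueSum_tau_mul (k : ℤ) {g : CoprodI (Factor m)} (hg : firstIndex g ≠ some false) :
    residueSum m e (tau m k * g) = (((sgn e * k : ℤ) : ZMod m).val : ℤ) + residueSum m e g := by
  rw [Int.cast_mul]
  exact weight_of_mul (syllableWeight_one m e false) _ hg

lemma residueSum_tau_sgn_mul_le (g : CoprodI (Factor m)) :
    residueSum m e (tau m (sgn e) * g) ≤ 1 + residueSum m e g := by
  have hval : (((sgn e : ZMod m) * (sgn e : ZMod m)).val : ℤ) ≤ 1 := by
    rw [← Int.cast_mul, sgn_mul_self, Int.cast_one, ZMod.val_one_eq_one_mod]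
    exact_mod_cast Nat.mod_le 1 m
  exact (weight_of_mul_le (syllableWeight_one m e false) (syllableWeight_mul_le m e false) _
    g).trans (add_le_add_left hval _)

lemma residueSum_letterImage_mul_le (x : Bool) (g : CoprodI (Factor m)) :
    residueSum m e (letterImage m (x, e) * g) ≤ 1 + residueSum m e g := by
  rw [letterImage, mul_assoc, mul_assoc, residueSum_sigmaIf_mul]
  exact (residueSum_tau_sgn_mul_le _).trans_eq (by rw [residueSum_sigmaIf_mul])

lemma residueSum_letterImage_pow_mul_le (x : Bool) (k : ℕ) (g : CoprodI (Factor m)) :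
    residueSum m e (letterImage m (x, e) ^ k * g) ≤ k + residueSum m e g := by
  induction k with
  | zero => simp
  | succ k ih =>
    rw [pow_succ', mul_assoc]
    have := residueSum_letterImage_mul_le (e := e) x (letterImage m (x, e) ^ k * g)
    push_cast
    linarith

lemma le_val_intCast (s : Bool) {l : ℕ} (hl : l < m) :
    sgn e * (sgn s * l) ≤ (((sgn e * (sgn s * l) : ℤ) : ZMod m).val : ℤ) := by
  by_cases h : s = e
  · rw [h, ← mul_assoc, sgn_mul_self, one_mul, Int.cast_natCast, ZMod.val_natCast_of_lt hl]
  · have hsgn : sgn e * (sgn s * l) = -l := by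
      rw [Bool.eq_not.2 h, sgn_not, neg_mul, mul_neg, ← mul_assoc, sgn_mul_self, one_mul]
    rw [hsgn]
    exact (neg_nonpos.2 (Int.natCast_nonneg l)).trans (Int.natCast_nonneg _)

lemma ofAdd_sgn_mul_ne_one (s : Bool) {l : ℕ} (h0 : 0 < l) (hl : l < m) :
    (Multiplicative.ofAdd ((sgn s * l : ℤ) : ZMod m) : Factor m false) ≠ 1 := by
  have hcast : (l : ZMod m) ≠ 0 := fun h =>
    Nat.not_dvd_of_pos_of_lt h0 hl ((ZMod.natCast_eq_zero_iff l m).1 h)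
  refine fun h => hcast ?_
  have hz : ((sgn s * l : ℤ) : ZMod m) = 0 := Multiplicative.ofAdd.injective h
  cases s <;> simpa [sgn] using hz

end Weight

section LeadingBlock

variable {m : ℕ} {x s : Bool} {v : List (Bool × Bool)} {l : ℕ} {g : CoprodI (Factor m)}

/-- The word `v` begins with an alternating block of length `l`, generator `x` and sign `s`, whose
image contributes the first power of `τ` to the normal form of the image of `v`; the rest of the
normal form is that of `g`. -/
structure IsLeadingBlock (m : ℕ) (x s : Bool) (v : List (Bool × Bool)) (l : ℕ)
    (g : CoprodI (Factor m)) : Prop where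
  pos : 0 < l
  isPrefix : altWord x s l <+: v
  image_eq : wordImage m v = sigmaIf m x s * (tau m (sgn s * l) * g)
  firstIndex_ne : firstIndex g ≠ some false
  le_residueSum (e : Bool) :
    sgn e * exponentSum v ≤ sgn e * (sgn s * l) + residueSum m e g

lemma firstIndex_sigma_mul (hg : firstIndex g ≠ some true) :
    firstIndex (sigma m * g) = some true :=
  firstIndex_of_mul (i := true) (by decide : Multiplicative.ofAdd (1 : ZMod 2) ≠ 1) hg

namespace IsLeadingBlock

lemma firstIndex_tau_mul (h : IsLeadingBlock m x s v l g) (hl : l < m) :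
    firstIndex (tau m (sgn s * l) * g) = some false :=
  firstIndex_of_mul (ofAdd_sgn_mul_ne_one s h.pos hl) h.firstIndex_ne

lemma wordImage_ne_one (h : IsLeadingBlock m x s v l g) (hl : l < m) : wordImage m v ≠ 1 := by
  intro h1
  have hfirst := congrArg firstIndex (h.image_eq.symm.trans h1)
  have htau := h.firstIndex_tau_mul hl
  rw [firstIndex_one, sigmaIf] at hfirst
  split_ifs at hfirst
  · rw [firstIndex_sigma_mul (by rw [htau]; decide)] at hfirst
    cases hfirst
  · rw [one_mul, htau] at hfirst
    cases hfirst

lemma sgn_mul_exponentSum_le (h : IsLeadingBlock m x s v l g) (hl : l < m) (e : Bool) :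
    sgn e * exponentSum v ≤ residueSum m e (wordImage m v) := by
  rw [h.image_eq, residueSum_sigmaIf_mul, residueSum_tau_mul _ h.firstIndex_ne]
  exact (h.le_residueSum e).trans (add_le_add_left (le_val_intCast s hl) _)

lemma singleton (m : ℕ) (x s : Bool) : IsLeadingBlock m x s [(x, s)] 1 (sigmaIf m (!x) s) where
  pos := one_pos
  isPrefix := List.prefix_rfl
  image_eq := by simp [wordImage, letterImage, mul_assoc]
  firstIndex_ne := by
    rw [sigmaIf, ← mul_one (sigma m)]
    split_ifs
    · rw [firstIndex_sigma_mul (by simp [firstIndex_one])]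
      decide
    · simp [firstIndex_one]
  le_residueSum e := by
    rw [← mul_one (sigmaIf m _ _), residueSum_sigmaIf_mul, residueSum_one]
    simp [exponentSum]

lemma cons_of_ne (h : IsLeadingBlock m (!x) s v l g) :
    IsLeadingBlock m x s ((x, s) :: v) (l + 1) g where
  pos := l.succ_pos
  isPrefix := List.cons_prefix_cons.2 ⟨rfl, h.isPrefix⟩
  image_eq := by
    calc wordImage m ((x, s) :: v)
        = sigmaIf m x s * tau m (sgn s) * (sigmaIf m (!x) s * sigmaIf m (!x) s) *
            tau m (sgn s * l) * g := by
          simp only [wordImage_cons, letterImage, h.image_eq, mul_assoc]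
      _ = sigmaIf m x s * (tau m (sgn s + sgn s * l) * g) := by
          rw [sigmaIf_mul_self, mul_one, tau_add]
          simp only [mul_assoc]
      _ = sigmaIf m x s * (tau m (sgn s * (l + 1 : ℕ)) * g) := by
          congr 3
          push_cast
          ring
  firstIndex_ne := h.firstIndex_ne
  le_residueSum e := by
    have := h.le_residueSum e
    rw [exponentSum_cons]
    push_cast
    linarith

lemma cons_of_iff {y t : Bool} (h : IsLeadingBlock m y t v l g) (hl : l < m)
    (hxy : x = s ↔ y = t) :
    IsLeadingBlock m x s ((x, s) :: v) 1 (sigma m * (tau m (sgn t * l) * g)) where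
  pos := one_pos
  isPrefix := ⟨v, rfl⟩
  image_eq := by
    rw [wordImage_cons, letterImage, h.image_eq, ← sigmaIf_not_mul m hxy, Nat.cast_one, mul_one]
    simp only [mul_assoc]
  firstIndex_ne := by
    rw [firstIndex_sigma_mul (by rw [h.firstIndex_tau_mul hl]; decide)]
    decide
  le_residueSum e := by
    rw [residueSum_sigma_mul, residueSum_tau_mul _ h.firstIndex_ne, exponentSum_cons]
    have := h.le_residueSum e
    have := le_val_intCast (e := e) t hl
    push_cast at this ⊢
    linarith

end IsLeadingBlock

lemma Windowless.exists_isLeadingBlock (hw : Windowless m ((x, s) :: v))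
    (hred : ((x, s) :: v).IsChain NoCancel) :
    ∃ l g, l < m ∧ IsLeadingBlock m x s ((x, s) :: v) l g := by
  suffices ∃ l g, IsLeadingBlock m x s ((x, s) :: v) l g by
    obtain ⟨l, g, h⟩ := this
    exact ⟨l, g, hw.lt_of_isPrefix h.isPrefix, h⟩
  induction v generalizing x s with
  | nil => exact ⟨1, _, .singleton m x s⟩
  | cons q v ih =>
    obtain ⟨y, t⟩ := q
    obtain ⟨hxy, hred⟩ := List.isChain_cons_cons.1 hred
    obtain ⟨l, g, h⟩ := ih hw.of_cons hred
    by_cases hext : y = !x ∧ t = s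
    · obtain ⟨rfl, rfl⟩ := hext
      exact ⟨l + 1, g, h.cons_of_ne⟩
    · refine ⟨1, _, h.cons_of_iff (hw.of_cons.lt_of_isPrefix h.isPrefix) ?_⟩
      simp only [NoCancel] at hxy
      revert hxy hext
      clear * -
      revert x y s t
      decide

lemma Windowless.wordImage_ne_one (hw : Windowless m v) (hred : v.IsChain NoCancel)
    (hne : v ≠ []) : wordImage m v ≠ 1 := by
  obtain ⟨⟨x, s⟩, v, rfl⟩ := List.exists_cons_of_ne_nil hne
  obtain ⟨l, g, hl, h⟩ := hw.exists_isLeadingBlock hred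
  exact h.wordImage_ne_one hl

lemma Windowless.sgn_mul_exponentSum_le (hw : Windowless m v) (hred : v.IsChain NoCancel)
    (e : Bool) : sgn e * exponentSum v ≤ residueSum m e (wordImage m v) := by
  cases v with
  | nil => exact (residueSum_one.trans (by simp [exponentSum])).ge
  | cons p v =>
    obtain ⟨l, g, hl, h⟩ := hw.exists_isLeadingBlock hred
    exact h.sgn_mul_exponentSum_le hl e

lemma exists_altWord_isInfix (hred : v.IsChain NoCancel) (hne : v ≠ [])
    (htriv : FreeGroup.mk v ∈ relations m) : ∃ x s, altWord x s m <:+: v := by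
  by_contra! hw
  exact Windowless.wordImage_ne_one hw hred hne (wordImage_eq_one htriv)

lemma exists_altWord_isInfix_of_window {y z : Bool} {k : ℕ} (hred : v.IsChain NoCancel)
    (htriv : FreeGroup.mk (altWord x s m ++
      (List.replicate k (y, s) ++ v ++ List.replicate l (z, s))) ∈ relations m) :
    ∃ x s, altWord x s m <:+: v := by
  by_contra! hw
  have hm : 0 < m := Windowless.lt_of_isPrefix (x := x) (s := s) hw List.nil_prefix
  have hexp := exponentSum_eq_zero htriv
  have himage := wordImage_eq_one htriv
  simp only [exponentSum_append, exponentSum_replicate, exponentSum_altWord] at hexp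
  simp only [wordImage_append, wordImage_replicate, wordImage_altWord_self] at himage
  have hv : wordImage m v = letterImage m (y, !s) ^ k * (sigmaIf m (xor x m.bodd) s *
      (sigmaIf m x s * (letterImage m (z, !s) ^ l * 1))) := by
    rw [letterImage_not, letterImage_not, ← sigmaIf_inv m x, ← sigmaIf_inv m (xor x m.bodd)]
    simp only [inv_pow, mul_one, ← mul_inv_rev]
    refine eq_inv_of_mul_eq_one_right ?_
    simp only [← mul_assoc] at himage
    simpa only [mul_assoc] using mul_eq_one_comm.1 himage
  have hle : sgn (!s) * exponentSum v ≤ k + l := by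
    refine (Windowless.sgn_mul_exponentSum_le hw hred (!s)).trans ?_
    rw [hv]
    refine (residueSum_letterImage_pow_mul_le y k _).trans ?_
    rw [residueSum_sigmaIf_mul, residueSum_sigmaIf_mul]
    have := residueSum_letterImage_pow_mul_le (m := m) (e := !s) z l 1
    rw [residueSum_one] at this
    linarith
  have hge : sgn (!s) * exponentSum v = m + k + l := by
    have hs := sgn_mul_self s
    rw [sgn_not]
    linear_combination (-sgn s) * hexp + (m + k + l : ℤ) * hs
  omega

end LeadingBlock

section Syllables

variable {L : List (Bool × Bool)} {m i j b p q : ℕ}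

/-- The generators of the letters of `L` at the positions `i, …, i + m - 1` alternate, and the
syllable containing the last of these letters ends before position `b`. -/
structure IsSeparatedWindow (L : List (Bool × Bool)) (m i b : ℕ) : Prop where
  cgen_ne : ∀ n, i ≤ n → n + 1 < i + m → cgen L n ≠ cgen L (n + 1)
  exists_cgen_ne : ∃ c, i + m ≤ c ∧ c ≤ b ∧ cgen L c ≠ cgen L (i + m - 1)

lemma IsSeparatedWindow.eq_or_of_constArc (h : IsSeparatedWindow L m i b) (hb : b ≤ L.length)
    (hp : i ≤ p ∧ p < i + m) (hq : q < L.length) (harc : ConstArc L p q) :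
    q = p ∨ i + m ≤ q ∧ q < b := by
  obtain ⟨d, -, hpd, hconst⟩ := harc
  obtain ⟨c, hic, hcb, hc⟩ := h.exists_cgen_ne
  have hd : d = 0 ∨ p = i + m - 1 := by
    by_contra! hd
    exact h.cgen_ne p hp.1 (by omega) (hconst 1 (by omega)).symm
  have hlt : p + d < c := by
    by_contra! hle
    have hp' : p = i + m - 1 := by omega
    refine hc ?_
    rw [← hp', ← hconst (c - p) (by omega), Nat.add_sub_cancel' (by omega)]
  rw [Nat.mod_eq_of_lt hq, Nat.mod_eq_of_lt (by omega)] at hpd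
  omega

lemma not_sameCyclicSyllable_of_isSeparatedWindow (h₁ : IsSeparatedWindow L m i j)
    (h₂ : IsSeparatedWindow L m j L.length) (hij : i + m ≤ j) (hj : j + m ≤ L.length)
    (hp : (i ≤ p ∧ p < i + m) ∨ (j ≤ p ∧ p < j + m))
    (hq : (i ≤ q ∧ q < i + m) ∨ (j ≤ q ∧ q < j + m)) (hpq : p ≠ q) :
    ¬ SameCyclicSyllable L p q := by
  have hnot {p q : ℕ} (hp : (i ≤ p ∧ p < i + m) ∨ (j ≤ p ∧ p < j + m))
      (hq : (i ≤ q ∧ q < i + m) ∨ (j ≤ q ∧ q < j + m)) (hpq : p ≠ q) : ¬ ConstArc L p q := by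
    intro harc
    rcases hp with hp | hp
    · have := h₁.eq_or_of_constArc (by omega) hp (by omega) harc
      omega
    · have := h₂.eq_or_of_constArc le_rfl hp (by omega) harc
      omega
  exact not_or.2 ⟨hnot hp hq hpq, hnot hq hp hpq.symm⟩

lemma cgen_eq_getElem (hi : i < L.length) : cgen L i = (L[i]).1 := by
  rw [cgen, Nat.mod_eq_of_lt hi, List.getD_eq_getElem _ _ hi]

lemma cgen_length : cgen L L.length = cgen L 0 := by
  rw [cgen, cgen, Nat.mod_self, Nat.zero_mod]

lemma cgen_append_add (A : List (Bool × Bool)) {B : List (Bool × Bool)} (hi : i < B.length) :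
    cgen (A ++ B) (A.length + i) = cgen B i := by
  rw [cgen_eq_getElem (by simpa using hi), cgen_eq_getElem hi]
  simp

lemma cgen_append_of_lt {A : List (Bool × Bool)} (B : List (Bool × Bool)) (hi : i < A.length) :
    cgen (A ++ B) i = cgen A i := by
  rw [cgen_eq_getElem (by rw [List.length_append]; omega), cgen_eq_getElem hi,
    List.getElem_append_left hi]

lemma cgen_ne_of_altWord (A : List (Bool × Bool)) (x s : Bool) (B : List (Bool × Bool)) {n : ℕ}
    (hAn : A.length ≤ n) (hn : n + 1 < A.length + m) :
    cgen (A ++ (altWord x s m ++ B)) n ≠ cgen (A ++ (altWord x s m ++ B)) (n + 1) := by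
  obtain ⟨n, rfl⟩ := Nat.exists_eq_add_of_le hAn
  have hlen := length_altWord x s m
  rw [add_assoc, cgen_append_add A (by simp; omega), cgen_append_add A (by simp; omega),
    cgen_append_of_lt B (by omega), cgen_append_of_lt B (by omega), cgen_eq_getElem (by omega),
    cgen_eq_getElem (by omega)]
  exact List.isChain_iff_getElem.1 (isChain_altWord x s m) n (by omega)

lemma cgen_append_of_mem_head? (A : List (Bool × Bool)) {B : List (Bool × Bool)} {r : Bool × Bool}
    (hr : r ∈ B.head?) : cgen (A ++ B) A.length = r.1 := by
  cases B with
  | nil => cases hr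
  | cons r' B =>
    cases hr
    exact cgen_append_add A (i := 0) (by simp)

lemma cgen_append_of_mem_getLast? {A : List (Bool × Bool)} (B : List (Bool × Bool))
    {r : Bool × Bool} (hr : r ∈ A.getLast?) : cgen (A ++ B) (A.length - 1) = r.1 := by
  obtain ⟨A, rfl⟩ := List.getLast?_eq_some_iff.1 hr
  rw [List.length_append, List.length_singleton, Nat.add_sub_cancel, List.append_assoc]
  exact cgen_append_of_mem_head? A rfl

lemma cgen_altWord_append_zero (hm : 0 < m) (x s : Bool) (B : List (Bool × Bool)) :
    cgen (altWord x s m ++ B) 0 = x := by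
  obtain ⟨n, rfl⟩ := Nat.exists_eq_add_one.2 hm
  rfl

lemma isSeparatedWindow_of_head?_ne {x s y : Bool} {k : ℕ} {v Z : List (Bool × Bool)}
    {r : Bool × Bool} (hy : (altWord x s m).getLast? = some (y, s)) (hr : r ∈ v.head?)
    (hry : r.1 ≠ y) (hb : m + k ≤ b) :
    IsSeparatedWindow (altWord x s m ++ (List.replicate k (y, s) ++ (v ++ Z))) m 0 b where
  cgen_ne n _ hn := cgen_ne_of_altWord [] x s _ n.zero_le (by simpa using hn)
  exists_cgen_ne := by
    refine ⟨m + k, by omega, hb, ?_⟩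
    have hlast := cgen_append_of_mem_getLast? (List.replicate k (y, s) ++ (v ++ Z)) hy
    have hnext := cgen_append_of_mem_head? (altWord x s m ++ List.replicate k (y, s))
      (B := v ++ Z) (r := r) (by rw [List.head?_append, Option.mem_def.1 hr]; rfl)
    rw [length_altWord] at hlast
    rw [List.length_append, length_altWord, List.length_replicate, List.append_assoc] at hnext
    rwa [zero_add, hnext, hlast]

lemma isSeparatedWindow_of_getLast?_ne {A B Z : List (Bool × Bool)} {x s : Bool}
    {r : Bool × Bool} (hr : r ∈ (A ++ (altWord x s m ++ B)).getLast?)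
    (hx : r.1 ≠ cgen (A ++ (altWord x s m ++ (B ++ Z))) 0) :
    IsSeparatedWindow (A ++ (altWord x s m ++ (B ++ Z))) m A.length
      (A ++ (altWord x s m ++ (B ++ Z))).length where
  cgen_ne n := cgen_ne_of_altWord A x s _
  exists_cgen_ne := by
    set L := A ++ (altWord x s m ++ (B ++ Z)) with hL
    have hlen : L.length = A.length + (m + (B.length + Z.length)) := by
      simp only [hL, List.length_append, length_altWord]
    by_cases h : cgen L (A.length + m - 1) = cgen L 0
    · have hlast := cgen_append_of_mem_getLast? Z hr
      simp only [List.append_assoc, ← hL, List.length_append, length_altWord] at hlast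
      rw [← h, ← hlast] at hx
      refine ⟨_, ?_, ?_, hx⟩
      · by_contra! hlt
        exact hx (congrArg (cgen L) (by omega))
      · omega
    · exact ⟨L.length, by omega, le_rfl, by rw [cgen_length]; exact Ne.symm h⟩

lemma take_drop_mem_pmWords (A : List (Bool × Bool)) (x s : Bool) (B : List (Bool × Bool)) :
    ((A ++ (altWord x s m ++ B)).drop A.length).take m ∈ pmWords m := by
  rw [List.drop_left, List.take_left' (length_altWord x s m)]
  exact altWord_mem_pmWords x s m

end Syllables

section CyclicWords

variable {m : ℕ} {u v : List (Bool × Bool)} {p q : Bool × Bool}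

lemma noCancel_symm (h : NoCancel p q) : NoCancel q p :=
  fun ⟨h₁, h₂⟩ => h ⟨h₁.symm, h₂.symm⟩

lemma exists_eq_replicate_append (hred : (p :: v).IsChain NoCancel) :
    ∃ k v', v = List.replicate k p ++ v' ∧ ∀ r ∈ v'.head?, r.1 ≠ p.1 := by
  induction v with
  | nil => exact ⟨0, [], rfl, by simp⟩
  | cons q v ih =>
    obtain ⟨hpq, hred⟩ := List.isChain_cons_cons.1 hred
    by_cases h : q.1 = p.1
    · obtain rfl : p = q := Prod.ext h.symm (not_not.1 fun hs => hpq ⟨h.symm, hs⟩)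
      obtain ⟨k, v', rfl, hv'⟩ := ih hred
      exact ⟨k + 1, v', rfl, hv'⟩
    · exact ⟨0, q :: v, rfl, by simpa using h⟩

lemma exists_eq_append_replicate (hred : (v ++ [q]).IsChain NoCancel) :
    ∃ l v', v = v' ++ List.replicate l q ∧ ∀ r ∈ v'.getLast?, r.1 ≠ q.1 := by
  have hrev : (q :: v.reverse).IsChain NoCancel := by
    rw [← List.isChain_reverse, List.reverse_cons, List.reverse_reverse]
    exact hred.imp fun _ _ => noCancel_symm
  obtain ⟨l, v', hv, hv'⟩ := exists_eq_replicate_append hrev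
  refine ⟨l, v'.reverse, ?_, by rwa [List.getLast?_reverse]⟩
  rw [← List.reverse_reverse v, hv, List.reverse_append, List.reverse_replicate]

lemma exists_eq_replicate_append_replicate (hp : (p :: v).IsChain NoCancel)
    (hq : (v ++ [q]).IsChain NoCancel) :
    ∃ k v' l, v = List.replicate k p ++ v' ++ List.replicate l q ∧
      (∀ r ∈ v'.head?, r.1 ≠ p.1) ∧ ∀ r ∈ v'.getLast?, r.1 ≠ q.1 := by
  obtain ⟨k, v, rfl, hhead⟩ := exists_eq_replicate_append hp
  rw [List.append_assoc] at hq
  obtain ⟨l, v, rfl, hlast⟩ := exists_eq_append_replicate hq.right_of_append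
  refine ⟨k, v, l, (List.append_assoc _ _ _).symm, fun r hr => hhead r ?_, hlast⟩
  rw [List.head?_append, Option.mem_def.1 hr]
  rfl

lemma exists_rotate_eq_altWord_append (hne : u ≠ []) (hred : CyclicallyReduced u)
    (htriv : FreeGroup.mk u ∈ relations m) :
    ∃ i x s v, u.rotate i = altWord x s m ++ v := by
  have hred₀ : u.IsChain NoCancel := List.rotate_zero u ▸ hred 0
  obtain ⟨x, s, A, B, rfl⟩ := exists_altWord_isInfix hred₀ hne htriv
  exact ⟨A.length, x, s, B ++ A, by rw [List.append_assoc, List.rotate_append_length_eq,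
    List.append_assoc]⟩

lemma exists_rotate_eq_two_windows (hm : 0 < m) (hne : u ≠ []) (hred : CyclicallyReduced u)
    (htriv : FreeGroup.mk u ∈ relations m) :
    ∃ i x s y k v l, u.rotate i =
        altWord x s m ++ (List.replicate k (y, s) ++ v ++ List.replicate l (x, s)) ∧
      (altWord x s m).getLast? = some (y, s) ∧ (∃ x' s', altWord x' s' m <:+: v) ∧
      (∀ r ∈ v.head?, r.1 ≠ y) ∧ ∀ r ∈ v.getLast?, r.1 ≠ x := by
  obtain ⟨i, x, s, v, hi⟩ := exists_rotate_eq_altWord_append hne hred htriv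
  obtain ⟨n, rfl⟩ := Nat.exists_eq_add_one.2 hm
  set y := xor x n.bodd
  have hlast : altWord x s (n + 1) = altWord x s n ++ [(y, s)] := altWord_succ_eq_append x s n
  have hred_i : (altWord x s (n + 1) ++ v).IsChain NoCancel := hi ▸ hred i
  have hred_after : (v ++ altWord x s (n + 1)).IsChain NoCancel := by
    have := hred (i + (altWord x s (n + 1)).length)
    rwa [← List.rotate_rotate, hi, List.rotate_append_length_eq] at this
  have hfront : ((y, s) :: v).IsChain NoCancel := by
    rw [hlast, List.append_assoc] at hred_i
    exact hred_i.right_of_append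
  have hback : (v ++ [(x, s)]).IsChain NoCancel := by
    rw [altWord, List.append_cons] at hred_after
    exact hred_after.left_of_append
  obtain ⟨k, v, l, rfl, hhead, htail⟩ := exists_eq_replicate_append_replicate hfront hback
  refine ⟨i, x, s, y, k, v, l, hi, by simp [hlast], ?_, hhead, htail⟩
  refine exists_altWord_isInfix_of_window ?_ (hi ▸ mk_rotate_mem_relations htriv i)
  exact hfront.infix ⟨(y, s) :: List.replicate k (y, s), List.replicate l (x, s), by simp⟩

lemma exists_rotate_isSeparatedWindow (hm : 0 < m) (hne : u ≠ []) (hred : CyclicallyReduced u)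
    (htriv : FreeGroup.mk u ∈ relations m) :
    ∃ i x s A x' s' B, u.rotate i = altWord x s m ++ (A ++ (altWord x' s' m ++ B)) ∧
      IsSeparatedWindow (u.rotate i) m 0 (m + A.length) ∧
      IsSeparatedWindow (u.rotate i) m (m + A.length) (u.rotate i).length := by
  obtain ⟨i, x, s, y, k, v, l, hi, hy, ⟨x', s', P, Q, hv⟩, hhead, hlast⟩ :=
    exists_rotate_eq_two_windows hm hne hred htriv
  have hne_v : v ≠ [] := by
    refine List.ne_nil_of_length_pos ?_
    rw [← hv, List.length_append, List.length_append, length_altWord]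
    omega
  set Y := List.replicate k (y, s) with hY
  set Z := List.replicate l (x, s)
  have hi₁ : u.rotate i = altWord x s m ++ (Y ++ (v ++ Z)) := by rw [hi, List.append_assoc Y]
  have hi₂ : u.rotate i = (altWord x s m ++ Y ++ P) ++ (altWord x' s' m ++ (Q ++ Z)) := by
    simp only [hi, ← hv, List.append_assoc]
  have hlen : (altWord x s m ++ Y ++ P).length = m + (Y ++ P).length := by
    simp only [List.length_append, length_altWord, Nat.add_assoc]
  refine ⟨i, x, s, Y ++ P, x', s', Q ++ Z, by simp only [hi₂, List.append_assoc], ?_, ?_⟩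
  · rw [hi₁]
    exact isSeparatedWindow_of_head?_ne hy (List.head_mem_head? hne_v)
      (hhead _ (List.head_mem_head? hne_v)) (by simp [hY])
  · have hmem := List.mem_getLast?_append_of_mem_getLast? (l₁ := altWord x s m ++ Y)
      (List.getLast_mem_getLast? hne_v)
    rw [← hlen, hi₂]
    refine isSeparatedWindow_of_getLast?_ne (r := v.getLast hne_v) ?_ ?_
    · simpa only [← hv, List.append_assoc] using hmem
    · rw [← hi₂, hi, cgen_altWord_append_zero hm]
      exact hlast _ (List.getLast_mem_getLast? hne_v)

end CyclicWords

end DihedralArtin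

open DihedralArtin in
theorem dihedral_artin_corner_lemma_general (m : ℕ) (hm : 0 < m)
    (u : List (Bool × Bool)) (hne : u ≠ [])
    (hred : CyclicallyReduced u)
    (htriv : FreeGroup.mk u ∈ Subgroup.normalClosure
      {FreeGroup.mk (altL false m) * (FreeGroup.mk (altL true m))⁻¹}) :
    ∃ k i₁ i₂ : ℕ, i₁ + m ≤ i₂ ∧ i₂ + m ≤ u.length ∧
      ((u.rotate k).drop i₁).take m ∈ pmWords m ∧
      ((u.rotate k).drop i₂).take m ∈ pmWords m ∧
      ∀ p q : ℕ,
        ((i₁ ≤ p ∧ p < i₁ + m) ∨ (i₂ ≤ p ∧ p < i₂ + m)) →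
        ((i₁ ≤ q ∧ q < i₁ + m) ∨ (i₂ ≤ q ∧ q < i₂ + m)) →
        p ≠ q → ¬ SameCyclicSyllable (u.rotate k) p q := by
  obtain ⟨k, x, s, A, x', s', B, hk, h₁, h₂⟩ := exists_rotate_isSeparatedWindow hm hne hred htriv
  have hk' : u.rotate k = (altWord x s m ++ A) ++ (altWord x' s' m ++ B) := by
    rw [hk, List.append_assoc]
  have hlen : (altWord x s m ++ A).length = m + A.length := by
    rw [List.length_append, length_altWord]
  have hle : m + A.length + m ≤ (u.rotate k).length := by
    rw [hk', List.length_append, hlen, List.length_append, length_altWord]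
    omega
  refine ⟨k, 0, m + A.length, by omega, by rwa [List.length_rotate] at hle, ?_, ?_, ?_⟩
  · exact hk ▸ take_drop_mem_pmWords [] x s _
  · exact hlen ▸ hk' ▸ take_drop_mem_pmWords (altWord x s m ++ A) x' s' B
  · intro p q
    exact not_sameCyclicSyllable_of_isSeparatedWindow h₁ h₂ (by omega) hle

/-- Let `m ≥ 3` and let `u` be a nonempty cyclically reduced word in `a^{±1}`,
`b^{±1}` representing the identity of the dihedral Artin group
`A_m = ⟨a, b | p_m(a,b) = p_m(b,a)⟩`. Then, possibly after replacing `u` by a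
cyclic permutation, `u` contains two disjoint subwords `w₁`, `w₂`, each equal to
one of `p_m(a,b)`, `p_m(a,b)⁻¹`, `p_m(b,a)`, `p_m(b,a)⁻¹`, such that no two of
the letters of `w₁` and `w₂` lie in the same syllable of `u` nor in the same
syllable of any cyclic permutation of `u`. -/
theorem dihedral_artin_corner_lemma (m : ℕ) (hm : 3 ≤ m)
    (u : List (Bool × Bool)) (hne : u ≠ [])
    (hred : CyclicallyReduced u)
    (htriv : FreeGroup.mk u ∈ Subgroup.normalClosure
      {FreeGroup.mk (altL false m) * (FreeGroup.mk (altL true m))⁻¹}) :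
    ∃ k i₁ i₂ : ℕ, i₁ + m ≤ i₂ ∧ i₂ + m ≤ u.length ∧
      ((u.rotate k).drop i₁).take m ∈ pmWords m ∧
      ((u.rotate k).drop i₂).take m ∈ pmWords m ∧
      ∀ p q : ℕ,
        ((i₁ ≤ p ∧ p < i₁ + m) ∨ (i₂ ≤ p ∧ p < i₂ + m)) →
        ((i₁ ≤ q ∧ q < i₁ + m) ∨ (i₂ ≤ q ∧ q < i₂ + m)) →
        p ≠ q → ¬ SameCyclicSyllable (u.rotate k) p q :=
  dihedral_artin_corner_lemma_general m (by omega) u hne hred htriv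
end

section
/- Let (Hᵢ)_{i∈ℕ} be a sequence of groups together with surjective group homomorphisms fᵢ : Hᵢ → Hᵢ₊₁ for every i. Suppose there exists a Hopfian group H such that Hᵢ is isomorphic to H for infinitely many indices i. Then there exists N such that fᵢ is a group isomorphism for every i ≥ N. -/
/-- A group is Hopfian if every surjective group endomorphism is injective. -/
def IsHopfianGroup (G : Type*) [Group G] : Prop :=
  ∀ φ : G →* G, Function.Surjective φ → Function.Injective φ

/-!
If `i` lies between two indices `m ≤ i < n` at which the sequence is isomorphic to the Hopfian
group `G`, then the composite `Hₘ → Hᵢ → Hᵢ₊₁ → Hₙ` is essentially a surjective endomorphism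
of `G`, hence injective. Since `Hₘ → Hᵢ` is onto, its middle factor `fᵢ` is injective too.
-/

open Function

theorem IsHopfianGroup.injective_of_surjective {G A B : Type*} [Group G] [MulOneClass A]
    [MulOneClass B] (hG : IsHopfianGroup G) (a : A ≃* G) (b : B ≃* G) {φ : A →* B}
    (hφ : Surjective φ) : Injective φ := by
  have h : Injective (b ∘ φ ∘ a.symm) :=
    hG ((b.toMonoidHom.comp φ).comp a.symm.toMonoidHom)
      (b.surjective.comp (hφ.comp a.symm.surjective))
  exact h.of_comp.of_comp_right a.symm.surjective

section Sequence

variable {H : ℕ → Type*} [∀ i, MulOneClass (H i)] {f : ∀ i : ℕ, H i →* H (i + 1)}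

theorem exists_surjective_monoidHom_of_le (hf : ∀ i, Surjective (f i)) {m n : ℕ} (hmn : m ≤ n) :
    ∃ g : H m →* H n, Surjective g := by
  induction n, hmn using Nat.le_induction with
  | base => exact ⟨MonoidHom.id _, surjective_id⟩
  | succ n _ ih =>
    obtain ⟨g, hg⟩ := ih
    exact ⟨(f n).comp g, (hf n).comp hg⟩

theorem IsHopfianGroup.injective_of_mulEquiv_of_le_of_lt {G : Type*} [Group G]
    (hG : IsHopfianGroup G) (hf : ∀ i, Surjective (f i)) {m i n : ℕ} (hmi : m ≤ i) (hin : i < n)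
    (a : H m ≃* G) (b : H n ≃* G) : Injective (f i) := by
  obtain ⟨g, hg⟩ := exists_surjective_monoidHom_of_le hf hmi
  obtain ⟨k, hk⟩ := exists_surjective_monoidHom_of_le hf (Nat.succ_le_of_lt hin)
  have hcomp : Injective (k ∘ f i ∘ g) :=
    hG.injective_of_surjective a b (φ := k.comp ((f i).comp g)) (hk.comp ((hf i).comp hg))
  exact hcomp.of_comp.of_comp_right hg

theorem epimorphism_sequence_stabilises_general (hf : ∀ i, Surjective (f i)) {G : Type*} [Group G]
    (hG : IsHopfianGroup G) (hinf : {i : ℕ | Nonempty (H i ≃* G)}.Infinite) {N : ℕ}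
    (a : H N ≃* G) : ∀ i ≥ N, Bijective (f i) := by
  intro i hNi
  obtain ⟨n, ⟨b⟩, hin⟩ := hinf.exists_gt i
  exact ⟨hG.injective_of_mulEquiv_of_le_of_lt hf hNi hin a b, hf i⟩

end Sequence

/-- Given a sequence of groups `Hᵢ` with surjective homomorphisms
`fᵢ : Hᵢ → Hᵢ₊₁`, if there is a Hopfian group `H` with `Hᵢ ≅ H` for infinitely
many `i`, then the sequence eventually consists of isomorphisms. -/
theorem epimorphism_sequence_stabilises {H : ℕ → Type*} [∀ i, Group (H i)]
    (f : ∀ i : ℕ, H i →* H (i + 1)) (hf : ∀ i, Function.Surjective (f i))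
    (H₀ : Type*) [Group H₀] (hHopf : IsHopfianGroup H₀)
    (hinf : {i : ℕ | Nonempty (H i ≃* H₀)}.Infinite) :
    ∃ N : ℕ, ∀ i ≥ N, Function.Bijective (f i) := by
  obtain ⟨N, ⟨a⟩⟩ := hinf.nonempty
  exact ⟨N, epimorphism_sequence_stabilises_general hf hHopf hinf a⟩
end
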